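/- arXiv:1609.07809 — 2 statements merged into one kernel-verified Lean document; each statement's English description precedes it below -/
import Mathlib

section
/- Let P, Q, P', Q' be integral polytopes in ℝ^n. Then P + Q' = P' + Q (Minkowski sum, as subsets of ℝ^n) if and only if for every group homomorphism φ : ℤ^n → ℤ, with φ_ℝ its ℝ-linear extension, one has φ_ℝ(P) + φ_ℝ(Q') = φ_ℝ(P') + φ_ℝ(Q) as subsets of ℝ. (This expresses the injectivity of the map ξ from the Grothendieck group of integral polytopes P_ℤ(H) to the product over all φ ∈ Hom(H,ℤ) of P_ℤ(ℤ).) -/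
/-!
Since `φ_ℝ` is additive, the projected identity says `φ_ℝ(P + Q') = φ_ℝ(P' + Q)`. It thus suffices
that a compact convex set `B` is determined by its images under integral functionals: a point
`x ∉ B` is strictly separated from `B` by some real functional `w`, and for a large integer `N` the
integral functional `⌊N w⌋` still separates, because it differs from `N w` by a bounded amount on
the bounded set `x - B`, whereas the separation gap of `N w` grows linearly in `N`
(`subset_of_forall_extendR_image_subset`).
-/

open Pointwise

/-- An integral polytope in `ℝ^n`: the convex hull of a nonempty finite
subset of the lattice `ℤ^n ⊆ ℝ^n`. -/
def IsIntegralPolytope {n : ℕ} (P : Set (Fin n → ℝ)) : Prop :=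
  ∃ S : Finset (Fin n → ℤ), S.Nonempty ∧
    P = convexHull ℝ ((fun z : Fin n → ℤ => fun i => (z i : ℝ)) '' (S : Set (Fin n → ℤ)))

/-- The `ℝ`-linear extension of a group homomorphism `φ : ℤ^n → ℤ`. -/
noncomputable def extendR {n : ℕ} (φ : (Fin n → ℤ) →+ ℤ) : (Fin n → ℝ) → ℝ :=
  fun x => ∑ i, x i * ((φ (Pi.single i 1) : ℤ) : ℝ)

lemma extendR_add {n : ℕ} (φ : (Fin n → ℤ) →+ ℤ) (x y : Fin n → ℝ) :
    extendR φ (x + y) = extendR φ x + extendR φ y := by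
  simp [extendR, add_mul, Finset.sum_add_distrib]

lemma extendR_image_add {n : ℕ} (φ : (Fin n → ℤ) →+ ℤ) (A B : Set (Fin n → ℝ)) :
    extendR φ '' (A + B) = extendR φ '' A + extendR φ '' B :=
  Set.image_image2_distrib (extendR_add φ)

/-- Every integer vector is the coefficient vector of a homomorphism `ℤ^n → ℤ`. -/
lemma exists_extendR_eq {n : ℕ} (z : Fin n → ℤ) :
    ∃ φ : (Fin n → ℤ) →+ ℤ, ∀ x, extendR φ x = ∑ i, x i * (z i : ℝ) := by
  refine ⟨(Fintype.linearCombination ℤ z).toAddMonoidHom, fun x => ?_⟩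
  simp [extendR, Fintype.linearCombination_apply_single]

lemma IsIntegralPolytope.isCompact {n : ℕ} {P : Set (Fin n → ℝ)} (h : IsIntegralPolytope P) :
    IsCompact P := by
  obtain ⟨S, -, rfl⟩ := h
  exact (S.finite_toSet.image _).isCompact_convexHull ℝ

lemma IsIntegralPolytope.convex {n : ℕ} {P : Set (Fin n → ℝ)} (h : IsIntegralPolytope P) :
    Convex ℝ P := by
  obtain ⟨S, -, rfl⟩ := h
  exact convex_convexHull ℝ _

/-- Integral functionals detect membership in a compact convex set. -/
lemma subset_of_forall_extendR_image_subset {n : ℕ} {A B : Set (Fin n → ℝ)}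
    (hB : IsCompact B) (hBc : Convex ℝ B)
    (h : ∀ φ : (Fin n → ℤ) →+ ℤ, extendR φ '' A ⊆ extendR φ '' B) : A ⊆ B := by
  intro x hxA
  by_contra hxB
  obtain ⟨f, u, hfB, hfx⟩ := geometric_hahn_banach_closed_point hBc hB.isClosed hxB
  obtain ⟨R, hR⟩ := hB.isBounded.exists_norm_le
  set w : Fin n → ℝ := fun i => f (Pi.single i 1) with hw
  have hf : ∀ y, f y = ∑ i, y i * w i := fun y => by
    conv_lhs => rw [pi_eq_sum_univ' y]
    simp [hw]
  -- `C` bounds `|(⌊N w⌋ - N w) · (x - b)|` uniformly in `b ∈ B` and `N`.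
  set C : ℝ := n * (‖x‖ + R) with hC
  obtain ⟨N, hN⟩ := exists_nat_gt (C / (f x - u))
  have hδ : 0 < f x - u := sub_pos.2 hfx
  rw [div_lt_iff₀ hδ] at hN
  obtain ⟨φ, hφ⟩ := exists_extendR_eq (fun i => ⌊N * w i⌋)
  obtain ⟨b, hb, hbx⟩ := h φ ⟨x, hxA, rfl⟩
  rw [hφ, hφ] at hbx
  have key : N * (f x - f b) ≤ C := by
    calc N * (f x - f b) = ∑ i, (x i - b i) * (N * w i - ⌊N * w i⌋) := by
          simp only [hf, mul_sub, sub_mul, Finset.sum_sub_distrib, Finset.mul_sum] at hbx ⊢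
          rw [hbx]
          simp only [mul_left_comm]
          ring
      _ ≤ ∑ _i : Fin n, (‖x‖ + R) := by
          refine Finset.sum_le_sum fun i _ => ?_
          have h0 : |x i - b i| ≤ ‖x‖ + R :=
            (norm_le_pi_norm (x - b) i).trans
              ((norm_sub_le x b).trans (by gcongr; exact hR b hb))
          have h1 := Int.fract_nonneg (N * w i)
          have h2 := (Int.fract_lt_one (N * w i)).le
          rw [Int.self_sub_floor]
          calc (x i - b i) * Int.fract (N * w i)
              ≤ |x i - b i| * Int.fract (N * w i) := by gcongr; exact le_abs_self _
            _ ≤ |x i - b i| := mul_le_of_le_one_right (abs_nonneg _) h2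
            _ ≤ _ := h0
      _ = C := by simp [hC, mul_add]
  have : (N : ℝ) * (f x - u) ≤ N * (f x - f b) := by
    gcongr
    exact (hfB b hb).le
  linarith

/-- For integral polytopes `P, Q, P', Q'` in `ℝ^n`, the Minkowski sums satisfy
`P + Q' = P' + Q` iff for every homomorphism `φ : ℤ^n → ℤ` (with `ℝ`-linear
extension `φ_ℝ`) one has `φ_ℝ(P) + φ_ℝ(Q') = φ_ℝ(P') + φ_ℝ(Q)` in `ℝ`. -/
theorem universal_L2_torsion_polytope_xi_injective {n : ℕ}
    (P Q P' Q' : Set (Fin n → ℝ))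
    (hP : IsIntegralPolytope P) (hQ : IsIntegralPolytope Q)
    (hP' : IsIntegralPolytope P') (hQ' : IsIntegralPolytope Q') :
    P + Q' = P' + Q ↔
      ∀ φ : (Fin n → ℤ) →+ ℤ,
        extendR φ '' P + extendR φ '' Q' = extendR φ '' P' + extendR φ '' Q := by
  simp only [← extendR_image_add]
  refine ⟨fun h φ => by rw [h], fun h => Set.Subset.antisymm ?_ ?_⟩
  · exact subset_of_forall_extendR_image_subset (hP'.isCompact.add hQ.isCompact)
      (hP'.convex.add hQ.convex) fun φ => (h φ).subset
  · exact subset_of_forall_extendR_image_subset (hP.isCompact.add hQ'.isCompact)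
      (hP.convex.add hQ'.convex) fun φ => (h φ).superset
end

section
/- Let P and Q be integral polytopes in ℝ^n with P ≠ Q. Then there exists a group homomorphism φ : ℤ^n → ℤ such that the images φ_ℝ(P) and φ_ℝ(Q) under the ℝ-linear extension φ_ℝ : ℝ^n → ℝ are different subsets of ℝ. -/
/-!
If `P ≠ Q`, one of the polytopes contains a point `x` outside the other, say `x ∉ Q`. By
Hahn-Banach some real linear functional is strictly larger at `x` than on all of `Q`. As `Q` is the
convex hull of finitely many points, this amounts to finitely many strict inequalities, an open
condition on the coefficient vector of the functional, so it is satisfied by a rational vector and,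
after clearing denominators, by an integral one (`exists_int_separating`). The corresponding
homomorphism `φ` has `φ_ℝ(x) ∉ φ_ℝ(Q)`.
-/

open Pointwise

/-- Hahn-Banach separation of a point from the convex hull of a finite set, by a linear functional
with integer coefficients. -/
lemma exists_int_separating {n : ℕ} {T : Set (Fin n → ℝ)} (hT : T.Finite) {x : Fin n → ℝ}
    (hx : x ∉ convexHull ℝ T) :
    ∃ c : Fin n → ℤ, ∀ y ∈ convexHull ℝ T, ∑ i, y i * (c i : ℝ) < ∑ i, x i * (c i : ℝ) := by
  obtain ⟨f, u, hfu, hux⟩ :=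
    geometric_hahn_banach_closed_point (convex_convexHull ℝ T) (hT.isClosed_convexHull ℝ) hx
  have hf : ∀ y, f y = ∑ i, y i * f (Pi.single i 1) := fun y => by
    conv_lhs => rw [pi_eq_sum_univ' y]
    simp [map_sum]
  -- The coefficient vectors that separate `x` from every point of `T`.
  let U : Set (Fin n → ℝ) := ⋂ t ∈ T, {w | ∑ i, t i * w i < ∑ i, x i * w i}
  have hUo : IsOpen U :=
    hT.isOpen_biInter fun t _ => isOpen_lt (by fun_prop) (by fun_prop)
  have hUne : U.Nonempty := by
    refine ⟨fun i => f (Pi.single i 1), Set.mem_iInter₂.2 fun t ht => ?_⟩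
    change ∑ i, t i * f (Pi.single i 1) < ∑ i, x i * f (Pi.single i 1)
    rw [← hf, ← hf]
    exact (hfu t (subset_convexHull ℝ T ht)).trans hux
  have hdense : DenseRange (Pi.map fun (_ : Fin n) (q : ℚ) => (q : ℝ)) :=
    DenseRange.piMap fun _ => Rat.denseRange_cast
  obtain ⟨q, hq⟩ := hdense.exists_mem_open hUo hUne
  obtain ⟨b, hb⟩ := IsLocalization.exist_integer_multiples_of_finite (nonZeroDivisors ℤ) q
  choose c hc using hb
  have hb0 : (b : ℤ) ≠ 0 := nonZeroDivisors.coe_ne_zero b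
  -- The common denominator `b` may be negative, so multiply by it once more.
  have hbpos : (0 : ℝ) < (b : ℤ) * (b : ℤ) := by
    have : ((b : ℤ) : ℝ) ≠ 0 := by exact_mod_cast hb0
    exact mul_self_pos.2 this
  have hcq : ∀ i, (((b : ℤ) * c i : ℤ) : ℝ) = ((b : ℤ) * (b : ℤ) : ℝ) * (q i : ℝ) := fun i => by
    have h : (c i : ℚ) = (b : ℤ) * q i := by simpa using hc i
    have h' : (c i : ℝ) = (b : ℤ) * q i := by exact_mod_cast congrArg (Rat.cast : ℚ → ℝ) h
    push_cast
    rw [h', mul_assoc]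
  have hsum : ∀ y : Fin n → ℝ, ∑ i, y i * (((b : ℤ) * c i : ℤ) : ℝ)
      = ((b : ℤ) * (b : ℤ) : ℝ) * ∑ i, y i * (q i : ℝ) := fun y => by
    rw [Finset.mul_sum]
    refine Finset.sum_congr rfl fun i _ => ?_
    rw [hcq]
    ring
  refine ⟨fun i => (b : ℤ) * c i, ?_⟩
  have hconv : Convex ℝ {y : Fin n → ℝ | ∑ i, y i * (q i : ℝ) < ∑ i, x i * (q i : ℝ)} :=
    convex_halfSpace_lt
      { map_add := fun y z => by simp [add_mul, Finset.sum_add_distrib]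
        map_smul := fun a y => by simp [mul_assoc, Finset.mul_sum] } _
  intro y hy
  rw [hsum, hsum]
  exact mul_lt_mul_of_pos_left
    (convexHull_min (fun t ht => Set.mem_iInter₂.1 hq t ht) hconv hy) hbpos

lemma exists_extendR_notMem_image {n : ℕ} {Q : Set (Fin n → ℝ)} (hQ : IsIntegralPolytope Q)
    {x : Fin n → ℝ} (hx : x ∉ Q) :
    ∃ φ : (Fin n → ℤ) →+ ℤ, extendR φ x ∉ extendR φ '' Q := by
  obtain ⟨S, -, rfl⟩ := hQ
  obtain ⟨c, hc⟩ := exists_int_separating (S.finite_toSet.image _) hx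
  let φ : (Fin n → ℤ) →+ ℤ :=
    { toFun := fun z => ∑ i, z i * c i
      map_zero' := by simp
      map_add' := fun y z => by simp [add_mul, Finset.sum_add_distrib] }
  have hφ : ∀ y, extendR φ y = ∑ i, y i * (c i : ℝ) := fun y => by
    simp [extendR, φ, Pi.single_apply]
  refine ⟨φ, ?_⟩
  rintro ⟨y, hy, hyx⟩
  rw [hφ, hφ] at hyx
  exact (hc y hy).ne hyx

/-- If `P ≠ Q` are integral polytopes in `ℝ^n`, then some homomorphism
`φ : ℤ^n → ℤ`, via its `ℝ`-linear extension, separates them: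
`φ_ℝ(P) ≠ φ_ℝ(Q)` as subsets of `ℝ`. -/
theorem exists_addMonoidHom_image_ne_of_integralPolytope_ne {n : ℕ}
    (P Q : Set (Fin n → ℝ))
    (hP : IsIntegralPolytope P) (hQ : IsIntegralPolytope Q) (hPQ : P ≠ Q) :
    ∃ φ : (Fin n → ℤ) →+ ℤ, extendR φ '' P ≠ extendR φ '' Q := by
  by_cases h : P ⊆ Q
  · obtain ⟨x, hxQ, hxP⟩ := Set.not_subset.1 fun h' => hPQ (h.antisymm h')
    obtain ⟨φ, hφ⟩ := exists_extendR_notMem_image hP hxP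
    exact ⟨φ, fun he => hφ (he ▸ Set.mem_image_of_mem _ hxQ)⟩
  · obtain ⟨x, hxP, hxQ⟩ := Set.not_subset.1 h
    obtain ⟨φ, hφ⟩ := exists_extendR_notMem_image hQ hxQ
    exact ⟨φ, fun he => hφ (he ▸ Set.mem_image_of_mem _ hxP)⟩
end
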